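/- Rectangular symmetry of Kostka numbers: for partitions λ = (i^{w_i})_{1≤i≤n} and λ̂ = (i^{w_{n+1-i}})_{1≤i≤n} obtained by complementing within an (n+1) × (Σ w_i) rectangle, and partitions μ', μ̂' related by the complementary relation μ_i + μ̂_{n-i+2} = Σ_{1≤j≤n} w_j, the Kostka numbers agree: K_{λ, μ'} = K_{λ̂, μ̂'}. -/

import Mathlib

open Finset

/-- The Kostka number: the number of semistandard Young tableaux of shape `lam` in which the
value `k` appears exactly `content k` times. -/
noncomputable def kostka (lam : YoungDiagram) (content : ℕ → ℕ) : ℕ :=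
  Nat.card {T : SemistandardYoungTableau lam //
    ∀ k : ℕ, (lam.cells.filter (fun c => T c.1 c.2 = k)).card = content k}

/-- Indicator function of a finite set of columns. -/
def colInd {m : ℕ} (s : Finset (Fin m)) (c : Fin m) : ℤ := if c ∈ s then 1 else 0

/-- The number of chains of column-height vectors ending at `v`, adding vertical 0/1 steps. -/
noncomputable def chainK (m : ℕ) : List ℕ → (Fin m → ℤ) → ℤ
  | [], v => open Classical in if v = 0 then 1 else 0
  | a :: l, v => open Classical in ∑ s ∈ powersetCard a (univ : Finset (Fin m)),
      if Antitone (v - colInd s) then chainK m l (v - colInd s) else 0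

/-- Staircase. -/
def stair (m : ℕ) (c : Fin m) : ℤ := - (c : ℤ)

/-- The alternating version. -/
noncomputable def chainF (m : ℕ) : List ℕ → (Fin m → ℤ) → ℤ
  | [], v => open Classical in ∑ σ : Equiv.Perm (Fin m),
      (Equiv.Perm.sign σ : ℤ) * if v ∘ σ = stair m then 1 else 0
  | a :: l, v => ∑ s ∈ powersetCard a (univ : Finset (Fin m)), chainF m l (v - colInd s)

theorem chainF_perm (m : ℕ) {l l' : List ℕ} (h : l.Perm l') : chainF m l = chainF m l' := by
  induction h with
  | nil => rfl
  | cons x _ ih => funext v; simp [chainF, ih]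
  | swap x y l =>
    funext v
    simp only [chainF]
    rw [Finset.sum_comm]
    simp only [sub_right_comm]
  | trans _ _ h1 h2 => exact h1.trans h2

theorem chainF_alt (m : ℕ) (τ : Equiv.Perm (Fin m)) (l : List ℕ) (v : Fin m → ℤ) :
    chainF m l (v ∘ τ) = (Equiv.Perm.sign τ : ℤ) * chainF m l v := by
  induction l generalizing v with
  | nil =>
    simp only [chainF]
    rw [Finset.mul_sum]
    refine Fintype.sum_equiv (Equiv.mulLeft τ) _ _ fun σ => ?_
    have : (v ∘ ⇑((Equiv.mulLeft τ) σ)) = (v ∘ τ) ∘ σ := by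
      ext; simp
    rw [this]
    rw [← mul_assoc]
    congr 1
    simp only [Equiv.coe_mulLeft, Equiv.Perm.sign_mul, Units.val_mul]
    rw [← mul_assoc]
    have : ((Equiv.Perm.sign τ : ℤˣ) : ℤ) * (Equiv.Perm.sign τ : ℤˣ) = 1 := by
      rw [← Units.val_mul, Int.units_mul_self]; rfl
    rw [this, one_mul]
  | cons a l ih =>
    simp only [chainF]
    rw [Finset.mul_sum]
    refine Finset.sum_equiv τ.finsetCongr ?_ ?_
    · intro s; simp [mem_powersetCard]
    · intro s _
      rw [← ih]
      congr 1
      ext c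
      simp [colInd]

theorem chainF_zero (m : ℕ) (l : List ℕ) (v : Fin m → ℤ) (i j : Fin m) (hij : i ≠ j)
    (h : v i = v j) : chainF m l v = 0 := by
  have h1 := chainF_alt m (Equiv.swap i j) l v
  have h2 : v ∘ Equiv.swap i j = v := by
    ext c
    simp only [Function.comp, Equiv.swap_apply_def]
    split_ifs <;> simp_all
  rw [h2, Equiv.Perm.sign_swap hij] at h1
  simp at h1
  linarith

theorem chainK_eq_chainF (m : ℕ) (l : List ℕ) (v : Fin m → ℤ) (hv : Antitone v) :
    chainK m l v = chainF m l (v + stair m) := by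
  induction l generalizing v with
  | nil =>
    simp only [chainK, chainF]
    have hst : StrictAnti (v + stair m) := by
      intro i j hij
      have := hv hij.le
      have h2 : (i : ℕ) < j := hij
      simp only [Pi.add_apply, stair]
      omega
    rw [Finset.sum_eq_single 1]
    · simp
    · intro σ _ hσ
      rw [if_neg, mul_zero]
      intro h
      apply hσ
      have hs : StrictMono σ := by
        intro i j hij
        by_contra hc
        have h3 := hst.antitone (not_lt.1 hc)
        have h4 := congrFun h i
        have h5 := congrFun h j
        simp only [Function.comp, stair] at h4 h5
        rw [h4, h5] at h3
        have h2 : (i : ℕ) < j := hij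
        omega
      ext i
      have : σ = (1 : Equiv.Perm (Fin m)) := by
        have := Subsingleton.elim (hs.orderIsoOfSurjective σ σ.surjective) (OrderIso.refl _)
        ext k
        have := congrArg (fun f : Fin m ≃o Fin m => f k) this
        simpa using congrArg Fin.val this
      rw [this]
    · simp
  | cons a l ih =>
    simp only [chainK, chainF]
    refine Finset.sum_congr rfl fun s _ => ?_
    split_ifs with h
    · rw [ih _ h]
      congr 1
      abel
    · rw [eq_comm]
      have : ∃ i j : Fin m, i < j ∧ (v - colInd s) i < (v - colInd s) j ∧ (j : ℕ) = i + 1 := by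
        by_contra hc
        push Not at hc
        apply h
        rcases m with _ | m
        · intro i; exact i.elim0
        · rw [Fin.antitone_iff_succ_le]
          intro i
          by_contra hd
          exact hc _ _ (Fin.castSucc_lt_succ) (not_le.1 hd) (by simp)
      obtain ⟨i, j, hij, h1, h2⟩ := this
      refine chainF_zero m l _ i j hij.ne ?_
      have h3 := hv hij.le
      simp only [Pi.sub_apply, Pi.add_apply, colInd, stair] at *
      split_ifs at * <;> omega

theorem chainK_perm (m : ℕ) {l l' : List ℕ} (h : l.Perm l') (v : Fin m → ℤ) (hv : Antitone v) :
    chainK m l v = chainK m l' v := by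
  rw [chainK_eq_chainF m l v hv, chainK_eq_chainF m l' v hv, chainF_perm m h]

theorem chainK_compl (m : ℕ) (l : List ℕ) (hl : ∀ a ∈ l, a ≤ m) (v : Fin m → ℤ) :
    chainK m l v = chainK m (l.map (m - ·)) (fun c => (l.length : ℤ) - v c.rev) := by
  induction l generalizing v with
  | nil =>
    simp only [chainK, List.map_nil, List.length_nil]
    congr 1
    simp only [funext_iff, eq_iff_iff]
    constructor
    · intro h c; simp [h]
    · intro h c; have := h c.rev; simpa using this
  | cons a l ih =>
    simp only [chainK, List.map_cons]
    have ha : a ≤ m := hl a (by simp)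
    refine Finset.sum_bij' (fun s _ => (Fin.revPerm.finsetCongr s)ᶜ)
      (fun s _ => (Fin.revPerm.finsetCongr s)ᶜ) ?_ ?_ ?_ ?_ ?_
    · intro s hs
      simp only [mem_powersetCard, subset_univ, true_and] at hs ⊢
      simp [card_compl, hs]
    · intro s hs
      simp only [mem_powersetCard, subset_univ, true_and] at hs ⊢
      simp [card_compl, hs]; omega
    · intro s _; ext; simp
    · intro s _; ext; simp
    · intro s _
      have key : (fun c : Fin m => (((a :: l).length : ℕ) : ℤ) - v c.rev)
          - colInd (Fin.revPerm.finsetCongr s)ᶜ = fun c => (l.length : ℤ) - (v - colInd s) c.rev := by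
        ext c
        simp [colInd]
        split_ifs <;> ring
      rw [key, ← ih (fun b hb => hl b (by simp [hb]))]
      congr 1
      simp only [eq_iff_iff]
      constructor
      · intro h i j hij
        have := h (Fin.rev_le_rev.2 hij)
        simp only at *; linarith
      · intro h i j hij
        have := h (Fin.rev_le_rev.2 hij)
        simp only [Fin.rev_rev] at *; linarith

/-- Number of `i < k` with `c ∈ s i`. -/
noncomputable def colCnt {m : ℕ} (s : ℕ → Finset (Fin m)) (k : ℕ) (c : Fin m) : ℤ :=
  (Nat.count (fun i => c ∈ s i) k : ℤ)

theorem colCnt_succ {m : ℕ} (s : ℕ → Finset (Fin m)) (k : ℕ) :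
    colCnt s (k + 1) = colCnt s k + colInd (s k) := by
  ext c
  simp [colCnt, colInd, Nat.count_succ]

theorem colCnt_congr {m : ℕ} (s t : ℕ → Finset (Fin m)) (k : ℕ) (h : ∀ i < k, s i = t i) :
    colCnt s k = colCnt t k := by
  induction k with
  | zero => ext c; simp [colCnt]
  | succ k ih =>
    rw [colCnt_succ, colCnt_succ, ih (fun i hi => h i (by omega)), h k (by omega)]

/-- The chains. -/
def IsChainSeq (m : ℕ) (cont : ℕ → ℕ) (N : ℕ) (v : Fin m → ℤ) (s : ℕ → Finset (Fin m)) : Prop :=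
  (∀ k < N, (s k).card = cont k) ∧ (∀ k, N ≤ k → s k = ∅) ∧
    (∀ k < N, Antitone (colCnt s k)) ∧ colCnt s N = v

theorem exists_chain_finset (m : ℕ) (cont : ℕ → ℕ) (N : ℕ) (v : Fin m → ℤ) :
    ∃ S : Finset (ℕ → Finset (Fin m)), (∀ s, s ∈ S ↔ IsChainSeq m cont N v s) ∧
      (S.card : ℤ) = chainK m ((List.range N).map cont).reverse v := by
  classical
  induction N generalizing v with
  | zero =>
    by_cases hv : v = 0
    · refine ⟨{fun _ => ∅}, ?_, ?_⟩
      · intro s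
        simp only [mem_singleton, IsChainSeq]
        constructor
        · rintro rfl
          refine ⟨by simp, by simp, by simp, ?_⟩
          rw [hv]; ext; simp [colCnt]
        · rintro ⟨_, h, _⟩
          funext k; exact h k (by omega)
      · simp [chainK, hv]
    · refine ⟨∅, ?_, ?_⟩
      · intro s
        simp only [notMem_empty, IsChainSeq, false_iff]
        rintro ⟨_, _, _, h⟩
        apply hv; rw [← h]; ext; simp [colCnt]
      · simp [chainK, hv]
  | succ N ih =>
    choose S hS hc using ih
    refine ⟨((powersetCard (cont N) (univ : Finset (Fin m))).filter
      (fun s => Antitone (v - colInd s))).biUnion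
        (fun s => (S (v - colInd s)).image (fun f => Function.update f N s)), ?_, ?_⟩
    · intro t
      simp only [mem_biUnion, mem_filter, mem_powersetCard, subset_univ, true_and, mem_image, hS]
      constructor
      · rintro ⟨s, ⟨h1, h2⟩, f, ⟨f1, f2, f3, f4⟩, rfl⟩
        have hcc : ∀ k ≤ N, colCnt (Function.update f N s) k = colCnt f k := by
          intro k hk
          apply colCnt_congr
          intro i hi
          rw [Function.update_of_ne (by omega)]
        refine ⟨?_, ?_, ?_, ?_⟩
        · intro k hk
          by_cases hkN : k = N
          · subst hkN; simpa using h1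
          · rw [Function.update_of_ne hkN]; exact f1 k (by omega)
        · intro k hk
          rw [Function.update_of_ne (by omega)]; exact f2 k (by omega)
        · intro k hk
          rw [hcc k (by omega)]
          by_cases hkN : k = N
          · subst hkN; rw [f4]; exact h2
          · exact f3 k (by omega)
        · rw [colCnt_succ, hcc N le_rfl, f4]; simp
      · rintro ⟨t1, t2, t3, t4⟩
        rw [colCnt_succ] at t4
        have hcc : ∀ k ≤ N, colCnt (Function.update t N ∅) k = colCnt t k := by
          intro k hk
          apply colCnt_congr
          intro i hi
          rw [Function.update_of_ne (by omega)]
        have e : v - colInd (t N) = colCnt t N := by rw [← t4]; simp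
        refine ⟨t N, ⟨t1 N (by omega), ?_⟩, Function.update t N ∅, ⟨?_, ?_, ?_, ?_⟩, ?_⟩
        · rw [e]; exact t3 N (by omega)
        · intro k hk
          rw [Function.update_of_ne (by omega)]; exact t1 k (by omega)
        · intro k hk
          by_cases hkN : k = N
          · subst hkN; simp
          · rw [Function.update_of_ne hkN]; exact t2 k (by omega)
        · intro k hk
          rw [hcc k (by omega)]; exact t3 k (by omega)
        · rw [hcc N le_rfl, e]
        · simp
    · rw [card_biUnion]
      · rw [List.range_succ, List.map_append, List.reverse_append]
        simp only [List.map_cons, List.map_nil, List.reverse_cons, List.reverse_nil,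
          List.nil_append, List.cons_append, chainK]
        rw [← Finset.sum_filter]
        push_cast
        refine Finset.sum_congr rfl fun s _ => ?_
        rw [← hc, card_image_of_injOn]
        intro f hf g hg hfg
        have hf' := ((hS _ _).1 hf).2.1 N le_rfl
        have hg' := ((hS _ _).1 hg).2.1 N le_rfl
        funext k
        by_cases hkN : k = N
        · rw [hkN, hf', hg']
        · have := congrFun hfg k
          simpa [Function.update_of_ne hkN] using this
      · intro s _ t _ hst
        refine Finset.disjoint_left.2 ?_
        intro f hf hg
        simp only [mem_image] at hf hg
        obtain ⟨a, _, rfl⟩ := hf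
        obtain ⟨b, _, hb⟩ := hg
        have := congrFun hb N
        simp at this
        exact hst this.symm

/-- columns containing `k` -/
noncomputable def tabCols (m : ℕ) {lam : YoungDiagram} (T : SemistandardYoungTableau lam) (k : ℕ) :
    Finset (Fin m) :=
  open Classical in univ.filter (fun c : Fin m => ∃ r, (r, (c : ℕ)) ∈ lam ∧ T r c = k)

theorem count_tabCols (m : ℕ) {lam : YoungDiagram} (h : ℕ → ℕ)
    (hlam : ∀ r c : ℕ, (r, c) ∈ lam ↔ r < h c)
    (T : SemistandardYoungTableau lam) (k : ℕ) (c : Fin m) :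
    Nat.count (fun i => c ∈ tabCols m T i) k = ((range (h c)).filter (fun r => T r c < k)).card := by
  classical
  rw [Nat.count_eq_card_filter_range]
  have : (range k).filter (fun i => c ∈ tabCols m T i)
      = ((range (h c)).filter (fun r => T r c < k)).image (fun r => T r c) := by
    ext i
    simp only [mem_filter, mem_range, tabCols, mem_univ, true_and, mem_image, hlam]
    constructor
    · rintro ⟨h1, r, h2, rfl⟩; exact ⟨r, ⟨h2, h1⟩, rfl⟩
    · rintro ⟨r, ⟨h2, h1⟩, rfl⟩; exact ⟨h1, r, h2, rfl⟩
  rw [this, card_image_of_injOn]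
  intro r hr r' hr' e
  simp only [coe_filter, mem_range, Set.mem_ofPred_eq] at hr hr'
  rcases lt_trichotomy r r' with hlt | heq | hlt
  · have := T.col_strict hlt ((hlam _ _).2 hr'.1); simp only at e; omega
  · exact heq
  · have := T.col_strict hlt ((hlam _ _).2 hr.1); simp only at e; omega

theorem tab_lt_iff (m : ℕ) {lam : YoungDiagram} (h : ℕ → ℕ)
    (hlam : ∀ r c : ℕ, (r, c) ∈ lam ↔ r < h c)
    (T : SemistandardYoungTableau lam) (k : ℕ) (c : Fin m) (r : ℕ) (hr : r < h c) :
    T r c < k ↔ r < Nat.count (fun i => c ∈ tabCols m T i) k := by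
  rw [count_tabCols m h hlam]
  constructor
  · intro hk
    have : range (r + 1) ⊆ (range (h c)).filter (fun r => T r c < k) := by
      intro r' hr'
      simp only [mem_range, mem_filter] at *
      refine ⟨by omega, ?_⟩
      exact lt_of_le_of_lt (T.col_weak (by omega) ((hlam _ _).2 hr)) hk
    simpa using card_le_card this
  · intro hk
    by_contra hc
    have : (range (h c)).filter (fun r => T r c < k) ⊆ range r := by
      intro r' hr'
      simp only [mem_range, mem_filter] at *
      by_contra hd
      have := T.col_weak (not_lt.1 hd) ((hlam _ _).2 hr'.1)
      omega
    have := card_le_card this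
    simp at this
    omega

theorem card_tabCols (m : ℕ) {lam : YoungDiagram} (h : ℕ → ℕ)
    (hlam : ∀ r c : ℕ, (r, c) ∈ lam ↔ r < h c) (hm : ∀ c, m ≤ c → h c = 0)
    (T : SemistandardYoungTableau lam) (k : ℕ) :
    (lam.cells.filter (fun c => T c.1 c.2 = k)).card = (tabCols m T k).card := by
  classical
  rw [← card_map (Fin.valEmbedding) (s := tabCols m T k)]
  have : (tabCols m T k).map Fin.valEmbedding
      = (lam.cells.filter (fun c => T c.1 c.2 = k)).image Prod.snd := by
    ext c
    simp only [mem_map, tabCols, mem_filter, mem_univ, true_and, mem_image, YoungDiagram.mem_cells,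
      Fin.valEmbedding_apply, Prod.exists]
    constructor
    · rintro ⟨c', ⟨r, h1, h2⟩, rfl⟩
      exact ⟨r, c', ⟨h1, h2⟩, rfl⟩
    · rintro ⟨r, c', ⟨h1, h2⟩, rfl⟩
      have hc : c' < m := by
        by_contra hcm
        have := hm c' (by omega)
        have := (hlam _ _).1 h1
        omega
      exact ⟨⟨c', hc⟩, ⟨r, h1, h2⟩, rfl⟩
  rw [this, card_image_of_injOn]
  rintro ⟨r, c⟩ hr ⟨r', c'⟩ hr' e
  simp only [coe_filter, Set.mem_ofPred_eq, YoungDiagram.mem_cells] at hr hr' e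
  subst e
  rcases lt_trichotomy r r' with hlt | heq | hlt
  · have := T.col_strict hlt hr'.1; omega
  · rw [heq]
  · have := T.col_strict hlt hr.1; omega

/-- The tableau of a chain. -/
theorem exists_tab (m : ℕ) {lam : YoungDiagram} (h : ℕ → ℕ)
    (hlam : ∀ r c : ℕ, (r, c) ∈ lam ↔ r < h c) (hm : ∀ c, m ≤ c → h c = 0)
    (N : ℕ) (s : ℕ → Finset (Fin m)) (hs : ∀ k, N ≤ k → s k = ∅)
    (hN : ∀ c : Fin m, Nat.count (fun i => c ∈ s i) N = h c)
    (hanti : ∀ k < N, Antitone (colCnt s k)) :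
    ∃ T : SemistandardYoungTableau lam, tabCols m T = s := by
  classical
  -- the entries
  let p : ℕ → ℕ → Prop := fun c i => ∃ hc : c < m, (⟨c, hc⟩ : Fin m) ∈ s i
  have hcount : ∀ c (hc : c < m) k, Nat.count (p c) k = Nat.count (fun i => (⟨c, hc⟩ : Fin m) ∈ s i) k := by
    intro c hc k
    simp only [Nat.count_eq_card_filter_range]
    congr 1
    ext i
    simp [p, hc]
  have hle : ∀ c (hc : c < m) k, Nat.count (p c) k ≤ h c := by
    intro c hc k
    rw [← hN ⟨c, hc⟩, ← hcount c hc]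
    rcases le_total k N with hk | hk
    · exact Nat.count_monotone _ hk
    · obtain ⟨d, rfl⟩ := Nat.exists_eq_add_of_le hk
      rw [Nat.count_add]
      have : Nat.count (fun k => p c (N + k)) d = 0 := by
        rw [Nat.count_eq_card_filter_range, card_eq_zero, filter_eq_empty_iff]
        rintro x _ ⟨_, hx⟩
        rw [hs _ (by omega)] at hx
        simp at hx
      omega
  have hex : ∀ r c, r < h c → ∃ i < N, p c i ∧ Nat.count (p c) i = r := by
    intro r c hr
    have hc : c < m := by
      by_contra hcm
      have := hm c (by omega)
      omega
    have h1 : r < Nat.count (p c) N := by rw [hcount c hc, hN]; exact hr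
    have hfin : ∀ hf : (Set.ofPred (p c)).Finite, r < #hf.toFinset := by
      intro hf
      refine lt_of_lt_of_le h1 ?_
      rw [Nat.count_eq_card_filter_range]
      apply card_le_card
      intro x hx
      rw [Set.Finite.mem_toFinset]
      exact (mem_filter.1 hx).2
    exact ⟨Nat.nth (p c) r, Nat.nth_lt_of_lt_count h1, Nat.nth_mem r hfin, Nat.count_nth hfin⟩
  choose f hfN hfp hfc using hex
  have huniq : ∀ c i j, p c i → p c j → Nat.count (p c) i = Nat.count (p c) j → i = j :=
    fun c i j hi hj e => Nat.count_injective hi hj e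
  have hmono : ∀ c c' k, c ≤ c' → c' < m → k ≤ N → Nat.count (p c') k ≤ Nat.count (p c) k := by
    intro c c' k hcc hc' hk
    rw [hcount c (by omega), hcount c' hc']
    rcases hk.lt_or_eq with hk | rfl
    · have := hanti k hk (show (⟨c, by omega⟩ : Fin m) ≤ ⟨c', hc'⟩ from hcc)
      simpa [colCnt] using this
    · rw [hN, hN]
      by_contra hcon
      have h1 := (hlam (h c) c').2 (not_le.1 hcon)
      have h2 := (hlam _ _).1 (lam.up_left_mem le_rfl hcc h1)
      omega
  let T : SemistandardYoungTableau lam :=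
    { entry := fun r c => if hr : r < h c then f r c hr else 0
      row_weak' := by
        intro i j1 j2 hj hcell
        have h2 := (hlam _ _).1 hcell
        have h1 := (hlam _ _).1 (lam.up_left_mem le_rfl hj.le hcell)
        simp only [dif_pos h1, dif_pos h2]
        by_contra hcon
        have e1 := hfN i j2 h2
        have e2 : Nat.count (p j2) (f i j2 h2 + 1) = i + 1 := by
          rw [Nat.count_succ, if_pos (hfp i j2 h2), hfc]
        have e3 := hmono j1 j2 (f i j2 h2 + 1) hj.le (hfp i j2 h2).1 (by omega)
        have e4 := Nat.count_monotone (p j1) (show f i j2 h2 + 1 ≤ f i j1 h1 by omega)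
        rw [hfc i j1 h1] at e4
        omega
      col_strict' := by
        intro i1 i2 j hi hcell
        have h2 := (hlam _ _).1 hcell
        have h1 := (hlam _ _).1 (lam.up_left_mem hi.le le_rfl hcell)
        simp only [dif_pos h1, dif_pos h2]
        by_contra hcon
        have e4 := Nat.count_monotone (p j) (not_lt.1 hcon)
        rw [hfc, hfc] at e4
        omega
      zeros' := by
        intro i j hij
        rw [hlam] at hij
        simp [hij] }
  refine ⟨T, ?_⟩
  funext k
  ext c
  have hT : ∀ r c, T r c = if hr : r < h c then f r c hr else 0 := fun _ _ => rfl
  simp only [tabCols, mem_filter, mem_univ, true_and, hlam]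
  constructor
  · rintro ⟨r, hr, rfl⟩
    rw [hT, dif_pos hr]
    obtain ⟨_, h1⟩ := hfp r c hr
    exact h1
  · intro hk
    have hpk : p c k := ⟨c.2, hk⟩
    have hr : Nat.count (p c) k < h c := by
      refine lt_of_lt_of_le ?_ (hle c c.2 (k + 1))
      rw [Nat.count_succ, if_pos hpk]; omega
    refine ⟨_, hr, ?_⟩
    rw [hT, dif_pos hr]
    exact huniq c _ _ (hfp _ _ _) hpk (hfc _ _ _)

theorem kostka_eq_chainK (m N : ℕ) (lam : YoungDiagram) (h : ℕ → ℕ)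
    (hlam : ∀ r c : ℕ, (r, c) ∈ lam ↔ r < h c) (hm : ∀ c, m ≤ c → h c = 0)
    (cont : ℕ → ℕ) (hcont : ∀ k, N ≤ k → cont k = 0) :
    (kostka lam cont : ℤ)
      = chainK m ((List.range N).map cont).reverse (fun c => (h c : ℤ)) := by
  classical
  obtain ⟨S, hS, hc⟩ := exists_chain_finset m cont N (fun c => (h c : ℤ))
  rw [← hc, kostka]
  have hSc : S.card = Nat.card S := by simp
  rw [hSc]
  congr 1
  have hmem : ∀ T : SemistandardYoungTableau lam,
      (∀ k : ℕ, (lam.cells.filter (fun c => T c.1 c.2 = k)).card = cont k) → tabCols m T ∈ S := by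
    intro T hT
    have hT' : ∀ k, (tabCols m T k).card = cont k := fun k => by
      rw [← card_tabCols m h hlam hm]; exact hT k
    have hemp : ∀ k, N ≤ k → tabCols m T k = ∅ := fun k hk => by
      rw [← card_eq_zero, hT', hcont k hk]
    rw [hS]
    refine ⟨fun k _ => hT' k, hemp, ?_, ?_⟩
    · intro k hk c c' hcc
      simp only [colCnt, count_tabCols m h hlam]
      norm_cast
      apply card_le_card
      intro r hr
      simp only [mem_filter, mem_range] at hr ⊢
      have hcell := (hlam _ _).2 hr.1
      have hcc' : (c : ℕ) ≤ c' := hcc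
      exact ⟨(hlam _ _).1 (lam.up_left_mem le_rfl hcc' hcell),
        lt_of_le_of_lt (T.row_weak_of_le hcc' hcell) hr.2⟩
    · ext c
      simp only [colCnt, count_tabCols m h hlam]
      rw [filter_true_of_mem, card_range]
      intro r hr
      by_contra hcon
      have h1 : c ∈ tabCols m T (T r c) := by
        simp only [tabCols, mem_filter, mem_univ, true_and]
        exact ⟨r, (hlam _ _).2 (mem_range.1 hr), rfl⟩
      rw [hemp _ (not_lt.1 hcon)] at h1
      simp at h1
  refine Nat.card_eq_of_bijective (fun T => (⟨tabCols m T.1, hmem T.1 T.2⟩ : S)) ⟨?_, ?_⟩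
  · rintro ⟨T, hT⟩ ⟨T', hT'⟩ e
    have e' : tabCols m T = tabCols m T' := congrArg Subtype.val e
    apply Subtype.ext
    ext r c
    by_cases hr : r < h c
    · have hc : c < m := by
        by_contra hcm
        have := hm c (by omega)
        omega
      have key : ∀ k, T r c < k ↔ T' r c < k := by
        intro k
        have h1 := tab_lt_iff m h hlam T k ⟨c, hc⟩ r hr
        have h2 := tab_lt_iff m h hlam T' k ⟨c, hc⟩ r hr
        rw [e'] at h1
        exact h1.trans h2.symm
      have h1 := key (T r c + 1)
      have h2 := key (T' r c + 1)
      show T r c = T' r c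
      omega
    · rw [← hlam] at hr
      show T r c = T' r c
      rw [T.zeros hr, T'.zeros hr]
  · rintro ⟨s, hs⟩
    obtain ⟨h1, h2, h3, h4⟩ := (hS s).1 hs
    obtain ⟨T, hT⟩ := exists_tab m h hlam hm N s h2 (fun c => by
      have := congrFun h4 c
      simpa [colCnt] using this) h3
    refine ⟨⟨T, ?_⟩, Subtype.ext hT⟩
    intro k
    rw [card_tabCols m h hlam hm, hT]
    by_cases hk : k < N
    · exact h1 k hk
    · rw [h2 k (by omega), hcont k (by omega)]; simp

/-- Rectangular symmetry of Kostka numbers: for the partitions `λ = (i^{w_i})_{1≤i≤n}` and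
`λ̂ = (i^{w_{n+1-i}})_{1≤i≤n}` (complementary within an `(n+1) × (Σ w_i)` rectangle), and
for transpose partitions `μ'`, `μ̂'` of complementary compositions `μ`, `μ̂` (i.e.
`μ_i + μ̂_{n-i+2} = Σ_j w_j`), the Kostka numbers agree: `K_{λ,μ'} = K_{λ̂,μ̂'}`.
Here `λ` is encoded by its cells, `(r, c) ∈ λ ↔ r < Σ_{j≥c+1} w_j`, the content of `μ'`
assigns to the (0-indexed) value `k` the multiplicity `μ'_{k+1} = #{i : μ_i ≥ k+1}`. -/
theorem kostka_rectangular_symmetry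
    (n : ℕ) (w : ℕ → ℕ)
    (lam lamhat : YoungDiagram)
    (hlam : ∀ r c : ℕ, (r, c) ∈ lam ↔ r < ∑ j ∈ Icc (c + 1) n, w j)
    (hlamhat : ∀ r c : ℕ, (r, c) ∈ lamhat ↔ r < ∑ j ∈ Icc (c + 1) n, w (n + 1 - j))
    (μ μhat : Fin (n + 1) → ℕ)
    (hμ : ∀ i, μ i ≤ ∑ j ∈ Icc 1 n, w j)
    (hrel : ∀ i : Fin (n + 1), μ i + μhat i.rev = ∑ j ∈ Icc 1 n, w j) :
    kostka lam (fun k => (univ.filter (fun i : Fin (n + 1) => k + 1 ≤ μ i)).card)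
      = kostka lamhat (fun k => (univ.filter (fun i : Fin (n + 1) => k + 1 ≤ μhat i)).card) := by
  set N := ∑ j ∈ Icc 1 n, w j with hN
  set cont : ℕ → ℕ := fun k => (univ.filter (fun i : Fin (n + 1) => k + 1 ≤ μ i)).card with hc1
  set conth : ℕ → ℕ := fun k => (univ.filter (fun i : Fin (n + 1) => k + 1 ≤ μhat i)).card with hc2
  have hμhat : ∀ i, μhat i ≤ N := by
    intro i
    have := hrel i.rev
    rw [Fin.rev_rev] at this
    omega
  have hle : ∀ k, cont k ≤ n + 1 := by
    intro k
    exact (card_le_univ _).trans_eq (Fintype.card_fin _)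
  have hcont : ∀ k, N ≤ k → cont k = 0 := by
    intro k hk
    simp only [hc1, card_eq_zero, filter_eq_empty_iff]
    intro i _
    have := hμ i
    omega
  have hconth : ∀ k, N ≤ k → conth k = 0 := by
    intro k hk
    simp only [hc2, card_eq_zero, filter_eq_empty_iff]
    intro i _
    have := hμhat i
    omega
  have hcc : ∀ k < N, conth k = n + 1 - cont (N - 1 - k) := by
    intro k hk
    have e1 : conth k = (univ.filter (fun i : Fin (n + 1) => ¬ (N - 1 - k + 1 ≤ μ i))).card := by
      simp only [hc2]
      refine card_equiv Fin.revPerm ?_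
      intro i
      have := hrel i.rev
      rw [Fin.rev_rev] at this
      simp only [mem_filter, mem_univ, true_and, Fin.revPerm_apply]
      omega
    have e2 := card_filter_add_card_filter_not (s := (univ : Finset (Fin (n + 1))))
      (fun i : Fin (n + 1) => N - 1 - k + 1 ≤ μ i)
    rw [e1]
    simp only [hc1]
    simp only [card_univ, Fintype.card_fin] at e2
    omega
  have hm : ∀ c, n + 1 ≤ c → ∑ j ∈ Icc (c + 1) n, w j = 0 := by
    intro c hc
    rw [Icc_eq_empty (by omega), sum_empty]
  have hmh : ∀ c, n + 1 ≤ c → ∑ j ∈ Icc (c + 1) n, w (n + 1 - j) = 0 := by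
    intro c hc
    rw [Icc_eq_empty (by omega), sum_empty]
  have k1 := kostka_eq_chainK (n + 1) N lam _ hlam hm cont hcont
  have k2 := kostka_eq_chainK (n + 1) N lamhat _ hlamhat hmh conth hconth
  have hlist : ((List.range N).map conth)
      = (((List.range N).map cont).reverse).map (n + 1 - ·) := by
    apply List.ext_getElem
    · simp
    · intro k h1 h2
      simp only [List.length_map, List.length_range] at h1
      simp [hcc k h1]
  have hv : (fun c : Fin (n + 1) => ((((List.range N).map cont).reverse.length : ℕ) : ℤ)
      - ((∑ j ∈ Icc ((c.rev : ℕ) + 1) n, w j : ℕ) : ℤ))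
      = fun c : Fin (n + 1) => ((∑ j ∈ Icc ((c : ℕ) + 1) n, w (n + 1 - j) : ℕ) : ℤ) := by
    ext c
    have hcn := c.2
    have e1 : ∑ j ∈ Icc ((c : ℕ) + 1) n, w (n + 1 - j) = ∑ j ∈ Icc 1 (n - c), w j := by
      refine Finset.sum_bij' (fun j _ => n + 1 - j) (fun j _ => n + 1 - j) ?_ ?_ ?_ ?_ ?_ <;>
        intro j hj <;> simp only [mem_Icc] at * <;> omega
    have e2 : N = ∑ j ∈ Icc 1 (n - c), w j + ∑ j ∈ Icc ((c.rev : ℕ) + 1) n, w j := by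
      rw [hN, ← sum_union]
      · congr 1
        ext j
        simp only [mem_union, mem_Icc, Fin.val_rev]
        omega
      · rw [disjoint_left]
        intro j
        simp only [mem_Icc, Fin.val_rev]
        omega
    rw [e1]
    simp only [List.length_reverse, List.length_map, List.length_range]
    omega
  have hanti : Antitone (fun c : Fin (n + 1) =>
      ((∑ j ∈ Icc ((c : ℕ) + 1) n, w (n + 1 - j) : ℕ) : ℤ)) := by
    intro c c' hcc'
    have : (c : ℕ) ≤ c' := hcc'
    simp only
    norm_cast
    apply sum_le_sum_of_subset
    apply Icc_subset_Icc_left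
    omega
  have key : (kostka lam cont : ℤ) = kostka lamhat conth := by
    rw [k1, k2, chainK_compl (n + 1) _ (by
      intro a ha
      simp only [List.mem_reverse, List.mem_map] at ha
      obtain ⟨k, _, rfl⟩ := ha
      exact hle k), hv, ← hlist]
    exact chainK_perm _ (List.reverse_perm _).symm _ hanti
  exact_mod_cast key
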